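/- (Theorem B, First Quaternionic Nullstellensatz) For any p₁, …, p_m, q ∈ ℍ_c[x₁, …, x_d] the following are equivalent: (1) for every point a ∈ ℝ^d such that p₁(a) = ⋯ = p_m(a) = 0 in ℍ, one has q(a) = 0; (2) q belongs to every real left ideal of ℍ_c[x₁, …, x_d] that contains p₁, …, p_m. -/

import Mathlib

open MvPolynomial

/-- Evaluation of a quaternionic polynomial with central (commuting) variables at a real
point, performed componentwise. -/
noncomputable def evalQ {d : ℕ} (a : Fin d → ℝ) (p : Quaternion (MvPolynomial (Fin d) ℝ)) :
    Quaternion ℝ :=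
  ⟨eval a p.re, eval a p.imI, eval a p.imJ, eval a p.imK⟩

/-- A left ideal `I` of a ring `A` with involution `star` is *real* if whenever
`star (a 0) * a 0 + ⋯ + star (a (k-1)) * a (k-1) ∈ I`, each `a i` lies in `I`.
(Note that in Mathlib, `Ideal A` means a left ideal of `A`.) -/
def Ideal.IsRealLeftIdeal {A : Type*} [Ring A] [StarRing A] (I : Ideal A) : Prop :=
  ∀ (k : ℕ) (a : Fin k → A), (∑ i, star (a i) * a i) ∈ I → ∀ i, a i ∈ I

/-!
The contraction of a real left ideal `I` of `ℍ[k[x]]` to the center `k[x]` is a real ideal, and it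
contains `normSq x = star x * x` for every `x ∈ I`. Since `normSq x` and `x` have the same zeros,
the real Nullstellensatz over `k` puts `normSq q` into `I`, and reality of `I` gives `q ∈ I`.
Conversely, the quaternionic polynomials vanishing at a fixed point form a real left ideal.

For the real Nullstellensatz, a real ideal avoiding `f` is enlarged to a real prime ideal `P`
avoiding `f`. The residue field of `P` is semireal and embeds into a semireal field `L` without
proper semireal algebraic extensions. By Artin and Schreier, `L` has an order with the intermediate
value property for polynomials, and the coordinate functions are a point over `L` at which `P`
vanishes but `f` does not.

A point over `L` is then transferred to `k`, preserving the signs of finitely many polynomials. For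
a single coordinate, two ordered fields with the intermediate value property are compared over a
maximal common ordered subfield `F`: by induction on the degree, every root in either field of a
polynomial over `F` lies in `F`, so that signs of polynomials over `F` are decided by cuts of `F`.
-/

open scoped Polynomial Quaternion
open SignType (sign)

/-- The intermediate value property for polynomials over an ordered field, which characterises
the real closed fields. -/
def PolynomialIVT (L : Type*) [Field L] [LinearOrder L] : Prop :=
  ∀ (p : L[X]) (a b : L), a < b → p.eval a * p.eval b < 0 → ∃ c ∈ Set.Ioo a b, p.IsRoot c

theorem polynomialIVT_real : PolynomialIVT ℝ := by
  intro p a b hab hneg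
  rcases mul_neg_iff.1 hneg with ⟨ha, hb⟩ | ⟨ha, hb⟩
  · exact intermediate_value_Ioo' hab.le p.continuousOn ⟨hb, ha⟩
  · exact intermediate_value_Ioo hab.le p.continuousOn ⟨ha, hb⟩

section RootFactorization

open Polynomial

variable {R : Type*} [CommRing R]

theorem derivative_pow_succ_mul_pow_succ_mul (u v r : R[X]) (m n : ℕ) :
    derivative (u ^ (m + 1) * (v ^ (n + 1) * r)) =
      u ^ m * v ^ n * (((m + 1) * v * derivative u + (n + 1) * u * derivative v) * r +
        u * v * derivative r) := by
  simp only [derivative_mul, derivative_pow_succ, map_add, map_natCast, map_one]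
  ring

theorem exists_eq_X_sub_C_pow_succ_mul {p : R[X]} (hp : p ≠ 0) {a : R}
    (ha : p.IsRoot a) :
    ∃ (n : ℕ) (q : R[X]), p = (Polynomial.X - Polynomial.C a) ^ (n + 1) * q ∧ ¬ q.IsRoot a := by
  obtain ⟨q, hpq, hq⟩ := exists_eq_pow_rootMultiplicity_mul_and_not_dvd p hp a
  obtain ⟨n, hn⟩ := Nat.exists_eq_add_of_le' ((rootMultiplicity_pos hp).2 ha)
  exact ⟨n, q, hn ▸ hpq, fun h ↦ hq (dvd_iff_isRoot.2 h)⟩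

end RootFactorization

namespace PolynomialIVT

variable {L : Type*} [Field L] [LinearOrder L] [IsStrictOrderedRing L]

theorem eval_mul_eval_pos (hL : PolynomialIVT L) {p : L[X]} {a b : L} (hab : a ≤ b)
    (hp : ∀ c ∈ Set.Icc a b, ¬ p.IsRoot c) : 0 < p.eval a * p.eval b := by
  rcases hab.eq_or_lt with rfl | hlt
  · exact mul_self_pos.2 (hp a (Set.left_mem_Icc.2 le_rfl))
  · by_contra! hle
    have hne : p.eval a * p.eval b ≠ 0 :=
      mul_ne_zero (hp a (Set.left_mem_Icc.2 hab)) (hp b (Set.right_mem_Icc.2 hab))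
    obtain ⟨c, hc, hroot⟩ := hL p a b hlt (hle.lt_of_ne hne)
    exact hp c (Set.Ioo_subset_Icc_self hc) hroot

theorem sign_eval_eq (hL : PolynomialIVT L) {p : L[X]} {a b : L}
    (hp : ∀ c ∈ Set.uIcc a b, ¬ p.IsRoot c) : sign (p.eval a) = sign (p.eval b) := by
  wlog hab : a ≤ b generalizing a b
  · exact (this (Set.uIcc_comm a b ▸ hp) (le_of_not_ge hab)).symm
  rw [Set.uIcc_of_le hab] at hp
  rcases mul_pos_iff.1 (hL.eval_mul_eval_pos hab hp) with ⟨ha, hb⟩ | ⟨ha, hb⟩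
  · rw [sign_pos ha, sign_pos hb]
  · rw [sign_neg ha, sign_neg hb]

theorem isSquare_of_nonneg (hL : PolynomialIVT L) {a : L} (ha : 0 ≤ a) : IsSquare a := by
  rcases ha.eq_or_lt with rfl | hpos
  · exact IsSquare.zero
  have hsign : (Polynomial.X ^ 2 - Polynomial.C a).eval 0 *
      (Polynomial.X ^ 2 - Polynomial.C a).eval (a + 1) < 0 := by
    simp only [Polynomial.eval_sub, Polynomial.eval_pow, Polynomial.eval_X, Polynomial.eval_C]
    nlinarith [mul_pos hpos hpos]
  obtain ⟨c, -, hc⟩ := hL _ 0 (a + 1) (by positivity) hsign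
  refine ⟨c, ?_⟩
  simpa [sub_eq_zero, eq_comm, sq] using hc

theorem strictMono_ringHom (hL : PolynomialIVT L) {K : Type*} [Field K] [LinearOrder K]
    [IsStrictOrderedRing K] (f : L →+* K) : StrictMono f := by
  refine Monotone.strictMono_of_injective (fun a b hab ↦ ?_) f.injective
  obtain ⟨c, hc⟩ := hL.isSquare_of_nonneg (sub_nonneg.2 hab)
  rw [← sub_nonneg, ← map_sub, hc, map_mul]
  exact mul_self_nonneg _

theorem exists_isRoot_derivative_of_consecutive (hL : PolynomialIVT L) {p : L[X]} (hp : p ≠ 0)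
    {a b : L} (hab : a < b) (ha : p.IsRoot a) (hb : p.IsRoot b)
    (hno : ∀ c ∈ Set.Ioo a b, ¬ p.IsRoot c) : ∃ c ∈ Set.Ioo a b, p.derivative.IsRoot c := by
  obtain ⟨m, q, rfl, hqa⟩ := exists_eq_X_sub_C_pow_succ_mul hp ha
  have hqb : q.IsRoot b := by simpa [sub_eq_zero, hab.ne'] using hb
  obtain ⟨n, r, rfl, hrb⟩ := exists_eq_X_sub_C_pow_succ_mul (right_ne_zero_of_mul hp) hqb
  have hra : ¬ r.IsRoot a := fun h ↦ hqa (by simp [h.eq_zero])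
  have hr : 0 < r.eval a * r.eval b := by
    refine hL.eval_mul_eval_pos hab.le fun c hc hrc ↦ ?_
    rcases eq_or_ne c a with rfl | hca
    · exact hra hrc
    rcases eq_or_ne c b with rfl | hcb
    · exact hrb hrc
    · exact hno c ⟨hc.1.lt_of_ne' hca, hc.2.lt_of_ne hcb⟩ (by simp [hrc.eq_zero])
  -- The cofactor `s` of `(X - a) ^ m * (X - b) ^ n` in the derivative changes sign on `(a, b)`.
  rw [derivative_pow_succ_mul_pow_succ_mul]
  set s : L[X] := (_ + _) * r + _ * Polynomial.derivative r with hs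
  have hsneg : s.eval a * s.eval b < 0 := by
    have hval : s.eval a * s.eval b =
        -((m + 1) * (n + 1) * (b - a) ^ 2 * (r.eval a * r.eval b)) := by
      simp [hs]
      ring
    have := sub_pos.2 hab
    rw [hval, neg_lt_zero]
    positivity
  obtain ⟨c, hc, hroot⟩ := hL s a b hab hsneg
  exact ⟨c, hc, by simp [hroot.eq_zero]⟩

theorem exists_isRoot_derivative (hL : PolynomialIVT L) {p : L[X]} {a b : L} (hab : a < b)
    (ha : p.IsRoot a) (hb : p.IsRoot b) : ∃ c ∈ Set.Ioo a b, p.derivative.IsRoot c := by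
  rcases eq_or_ne p 0 with rfl | hp
  · obtain ⟨c, hc⟩ := exists_between hab
    exact ⟨c, hc, by simp⟩
  let roots := p.roots.toFinset.filter (a < ·)
  have mem_roots {c : L} : c ∈ roots ↔ p.IsRoot c ∧ a < c := by simp [roots, hp]
  obtain ⟨b', hb', hmin⟩ := roots.exists_min_image id ⟨b, mem_roots.2 ⟨hb, hab⟩⟩
  rw [mem_roots] at hb'
  obtain ⟨c, hc, hroot⟩ := hL.exists_isRoot_derivative_of_consecutive hp hb'.2 ha hb'.1
    fun c hc hroot ↦ (hmin c (mem_roots.2 ⟨hroot, hc.1⟩)).not_gt hc.2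
  exact ⟨c, ⟨hc.1, hc.2.trans_le (hmin b (mem_roots.2 ⟨hb, hab⟩))⟩, hroot⟩

theorem sign_sub_eq_sign_eval_mul (hL : PolynomialIVT L) {p : L[X]} {a b y : L}
    (hp : ∀ c ∈ Set.Ioo a b, ¬ p.derivative.IsRoot c) (hy : y ∈ Set.Ioo a b) (hroot : p.IsRoot y)
    {c : L} (hc : c ∈ Set.Icc a b) : sign (c - y) = sign (p.eval c * p.eval b) := by
  obtain ⟨q, rfl⟩ := Polynomial.dvd_iff_isRoot.2 hroot
  have hq : ∀ z ∈ Set.Icc a b, ¬ q.IsRoot z := by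
    intro z hz hqz
    have hz' : ((Polynomial.X - Polynomial.C y) * q).IsRoot z := by simp [hqz.eq_zero]
    rcases lt_trichotomy z y with hlt | rfl | hlt
    · obtain ⟨w, hw, hw'⟩ := hL.exists_isRoot_derivative hlt hz' hroot
      exact hp w ⟨hz.1.trans_lt hw.1, hw.2.trans hy.2⟩ hw'
    · exact hp z hy (by simp [hqz.eq_zero])
    · obtain ⟨w, hw, hw'⟩ := hL.exists_isRoot_derivative hlt hroot hz'
      exact hp w ⟨hy.1.trans hw.1, hw.2.trans_le hz.2⟩ hw'
  have hpos : 0 < (b - y) * (q.eval c * q.eval b) :=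
    mul_pos (sub_pos.2 hy.2)
      (hL.eval_mul_eval_pos hc.2 fun z hz ↦ hq z (Set.Icc_subset_Icc_left hc.1 hz))
  have hval : (((Polynomial.X - Polynomial.C y) * q).eval c *
      ((Polynomial.X - Polynomial.C y) * q).eval b) =
      (c - y) * ((b - y) * (q.eval c * q.eval b)) := by
    simp only [Polynomial.eval_mul, Polynomial.eval_sub, Polynomial.eval_X, Polynomial.eval_C]
    ring
  rw [hval, sign_mul, sign_pos hpos, mul_one]

end PolynomialIVT

section CommonSubfields

theorem exists_lt_lt_forall_le_or_le {α β : Type*} [LinearOrder α] [LinearOrder β]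
    {f : α → β} (T : Finset α) {y : β} (hy : y ∉ Set.range f)
    (hlower : ∃ t ∈ T, f t < y) (hupper : ∃ t ∈ T, y < f t) :
    ∃ l u : α, f l < y ∧ y < f u ∧ ∀ t ∈ T, t ≤ l ∨ u ≤ t := by
  obtain ⟨l, hl, hlmax⟩ := (T.filter (f · < y)).exists_max_image id
    (Finset.filter_nonempty_iff.2 hlower)
  obtain ⟨u, hu, humin⟩ := (T.filter (y < f ·)).exists_min_image id
    (Finset.filter_nonempty_iff.2 hupper)
  refine ⟨l, u, (Finset.mem_filter.1 hl).2, (Finset.mem_filter.1 hu).2, fun t ht ↦ ?_⟩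
  rcases lt_trichotomy (f t) y with h | h | h
  · exact .inl (hlmax t (Finset.mem_filter.2 ⟨ht, h⟩))
  · exact absurd ⟨t, h⟩ hy
  · exact .inr (humin t (Finset.mem_filter.2 ⟨ht, h⟩))

variable {F L : Type*} [Field F] [LinearOrder F] [Field L] [LinearOrder L]

theorem sign_eval₂_ringHom {f : F →+* L} (hf : StrictMono f) (p : F[X]) (c : F) :
    sign (p.eval₂ f (f c)) = sign (p.eval c) := by
  rw [Polynomial.eval₂_at_apply, hf.sign_comp]

variable [IsStrictOrderedRing F] [IsStrictOrderedRing L]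

theorem sign_ringHom_sub {f : F →+* L} (hf : StrictMono f) (a b : F) :
    sign (f a - f b) = sign (a - b) := by
  rw [← map_sub, hf.sign_comp]

theorem exists_sign_sub_eq {f : F →+* L} (hf : StrictMono f) (T : Finset F) {y : L}
    (hy : y ∉ Set.range f) : ∃ z : F, ∀ t ∈ T, sign (z - t) = sign (y - f t) := by
  obtain ⟨z, hlo, hhi⟩ := Order.exists_between_finsets
    (lo := T.filter (f · < y)) (hi := T.filter (y < f ·)) fun s hs t ht ↦
      hf.lt_iff_lt.1 ((Finset.mem_filter.1 hs).2.trans (Finset.mem_filter.1 ht).2)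
  refine ⟨z, fun t ht ↦ ?_⟩
  rcases lt_trichotomy (f t) y with h | h | h
  · rw [sign_pos (sub_pos.2 h), sign_pos (sub_pos.2 (hlo t (Finset.mem_filter.2 ⟨ht, h⟩)))]
  · exact absurd ⟨t, h⟩ hy
  · rw [sign_neg (sub_neg.2 h), sign_neg (sub_neg.2 (hhi t (Finset.mem_filter.2 ⟨ht, h⟩)))]

theorem abs_lt_of_isRoot_of_monic {p : L[X]} (hp : p.Monic) {y : L} (hy : p.IsRoot y) :
    |y| < 1 + ∑ i ∈ Finset.range p.natDegree, |p.coeff i| := by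
  by_contra! hle
  set B := ∑ i ∈ Finset.range p.natDegree, |p.coeff i|
  have hB : 0 ≤ B := Finset.sum_nonneg fun i _ ↦ abs_nonneg _
  have hy1 : 1 ≤ |y| := by linarith
  have hy0 : 0 < |y| := by linarith
  have hpow : y ^ p.natDegree = -∑ i ∈ Finset.range p.natDegree, p.coeff i * y ^ i := by
    have := hy.eq_zero
    rw [Polynomial.eval_eq_sum_range, Finset.sum_range_succ, hp.coeff_natDegree, one_mul] at this
    linarith
  have hterm : ∀ i ∈ Finset.range p.natDegree,
      |p.coeff i * y ^ i| * |y| ≤ |p.coeff i| * |y| ^ p.natDegree := fun i hi ↦ by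
    rw [abs_mul, abs_pow, mul_assoc, ← pow_succ]
    exact mul_le_mul_of_nonneg_left (pow_le_pow_right₀ hy1 (Finset.mem_range.1 hi))
      (abs_nonneg _)
  have : |y| ^ p.natDegree * |y| ≤ B * |y| ^ p.natDegree := calc
    |y| ^ p.natDegree * |y| = |∑ i ∈ Finset.range p.natDegree, p.coeff i * y ^ i| * |y| := by
      rw [← abs_pow, hpow, abs_neg]
    _ ≤ (∑ i ∈ Finset.range p.natDegree, |p.coeff i * y ^ i|) * |y| := by
      gcongr
      exact Finset.abs_sum_le_sum_abs _ _
    _ ≤ B * |y| ^ p.natDegree := by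
      rw [Finset.sum_mul, Finset.sum_mul]
      exact Finset.sum_le_sum hterm
  nlinarith [pow_pos hy0 p.natDegree]

theorem exists_lt_of_eval₂_eq_zero {f : F →+* L} (hf : StrictMono f) {p : F[X]} (hp : p ≠ 0)
    {y : L} (hy : p.eval₂ f y = 0) : ∃ c : F, |y| < f c := by
  have hmonic := Polynomial.monic_mul_leadingCoeff_inv hp
  have hroot : ((p * Polynomial.C p.leadingCoeff⁻¹).map f).IsRoot y := by
    simp [Polynomial.eval_map, hy]
  have habs (a : F) : |f a| = f |a| := by
    simp only [abs_eq_max_neg, hf.monotone.map_max, map_neg]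
  have h := abs_lt_of_isRoot_of_monic (hmonic.map f) hroot
  simp only [Polynomial.coeff_map, habs, ← map_sum] at h
  exact ⟨_, by rwa [← map_one f, ← map_add] at h⟩

end CommonSubfields

universe u v

section SignCompatible

variable {L M : Type*} [Field L] [LinearOrder L] [Field M] [LinearOrder M]

/-- A subring of `L × M` is sign compatible if the two components of each of its elements have
the same sign. It is then the graph of an order isomorphism between a subring of `L` and a subring
of `M`. -/
def SignCompatible (G : Subring (L × M)) : Prop := ∀ a ∈ G, sign a.1 = sign a.2

theorem SignCompatible.exists_le_maximal {G₀ : Subring (L × M)} (h : SignCompatible G₀) :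
    ∃ G, G₀ ≤ G ∧ Maximal SignCompatible G := by
  refine zorn_le_nonempty₀ {G | SignCompatible G} (fun c hc hchain G hG ↦ ?_) G₀ h
  refine ⟨sSup c, fun a ha ↦ ?_, fun _ ↦ le_sSup⟩
  obtain ⟨H, hH, haH⟩ := (Subring.mem_sSup_of_directedOn ⟨G, hG⟩ hchain.directedOn).1 ha
  exact hc hH a haH

namespace SignCompatible

variable {G : Subring (L × M)}

theorem mem_of_maximal (hG : Maximal SignCompatible G) {y : L × M}
    (hy : ∀ g : G[X], sign (g.eval₂ G.subtype y).1 = sign (g.eval₂ G.subtype y).2) : y ∈ G := by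
  have hle : G ≤ (Polynomial.eval₂RingHom G.subtype y).range := fun a ha ↦
    ⟨Polynomial.C ⟨a, ha⟩, by simp⟩
  have hcompat : SignCompatible (Polynomial.eval₂RingHom G.subtype y).range := by
    rintro _ ⟨g, rfl⟩
    exact hy g
  exact hG.le_of_ge hcompat hle ⟨Polynomial.X, by simp⟩

theorem fst_eq_zero_iff (hG : SignCompatible G) {a : L × M} (ha : a ∈ G) :
    a.1 = 0 ↔ a.2 = 0 := by
  rw [← sign_eq_zero_iff, hG a ha, sign_eq_zero_iff]

theorem isUnit_of_ne_zero (hG : SignCompatible G) {a : L × M} (ha : a ∈ G) (ha0 : a ≠ 0) :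
    IsUnit a := by
  have h1 : a.1 ≠ 0 := fun h ↦ ha0 (Prod.ext h ((hG.fst_eq_zero_iff ha).1 h))
  have h2 : a.2 ≠ 0 := fun h ↦ ha0 (Prod.ext ((hG.fst_eq_zero_iff ha).2 h) h)
  exact Prod.isUnit_iff.2 ⟨h1.isUnit, h2.isUnit⟩

theorem sign_fst_eq_sign_snd_of_mul_eq_one [IsStrictOrderedRing L] [IsStrictOrderedRing M]
    {u v : L × M} (hu : sign u.1 = sign u.2) (huv : u * v = 1) : sign v.1 = sign v.2 := by
  have hv1 : sign u.1 * sign v.1 = 1 := by rw [← sign_mul, ← Prod.fst_mul, huv]; simp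
  have hv2 : sign u.1 * sign v.2 = 1 := by rw [hu, ← sign_mul, ← Prod.snd_mul, huv]; simp
  exact mul_left_cancel₀ (left_ne_zero_of_mul (hv1 ▸ one_ne_zero)) (hv1.trans hv2.symm)

theorem mem_of_mul_eq_one_of_maximal [IsStrictOrderedRing L] [IsStrictOrderedRing M]
    (hG : Maximal SignCompatible G) {u v : L × M} (hu : u ∈ G) (huv : u * v = 1) : v ∈ G := by
  refine mem_of_maximal hG fun g ↦ ?_
  let : Invertible v := ⟨u, huv, (mul_comm v u).trans huv⟩
  have hrev : g.reverse.eval₂ G.subtype u * v ^ g.natDegree = g.eval₂ G.subtype v :=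
    Polynomial.eval₂_reverse_mul_pow G.subtype v g
  have hmem : g.reverse.eval₂ G.subtype u ∈ G := by
    lift u to G using hu
    rw [← G.coe_subtype, Polynomial.eval₂_at_apply]
    exact Subtype.prop _
  rw [← hrev, Prod.fst_mul, Prod.snd_mul, Prod.pow_fst, Prod.pow_snd, sign_mul, sign_mul,
    sign_pow, sign_pow, hG.prop _ hmem, sign_fst_eq_sign_snd_of_mul_eq_one (hG.prop _ hu) huv]

theorem isField_of_maximal [IsStrictOrderedRing L] [IsStrictOrderedRing M]
    (hG : Maximal SignCompatible G) : IsField G where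
  exists_pair_ne := ⟨0, 1, zero_ne_one⟩
  mul_comm := mul_comm
  mul_inv_cancel {a} ha := by
    obtain ⟨v, hv⟩ := (hG.prop.isUnit_of_ne_zero a.2 (by simpa using ha)).exists_right_inv
    exact ⟨⟨v, mem_of_mul_eq_one_of_maximal hG a.2 hv⟩, Subtype.ext hv⟩

end SignCompatible

/-- Order embeddings `φ` and `ψ` of a field `F` into ordered fields `L` and `M` exhibit `F` as a
maximal common subfield if an element of `L` and an element of `M` that solve the same polynomial
inequalities over `F` come from one element of `F`. -/
structure IsMaximalCommonSubfield {F L M : Type*} [Field F] [LinearOrder F] [Field L]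
    [LinearOrder L] [Field M] [LinearOrder M] (φ : F →+* L) (ψ : F →+* M) : Prop where
  strictMono_left : StrictMono φ
  strictMono_right : StrictMono ψ
  exists_eq_of_sign_eq : ∀ (y : L) (b : M),
    (∀ g : F[X], sign (g.eval₂ φ y) = sign (g.eval₂ ψ b)) → ∃ c, φ c = y ∧ ψ c = b

theorem IsMaximalCommonSubfield.swap {F L M : Type*} [Field F] [LinearOrder F] [Field L]
    [LinearOrder L] [Field M] [LinearOrder M] {φ : F →+* L} {ψ : F →+* M}
    (h : IsMaximalCommonSubfield φ ψ) : IsMaximalCommonSubfield ψ φ where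
  strictMono_left := h.strictMono_right
  strictMono_right := h.strictMono_left
  exists_eq_of_sign_eq y b hyb :=
    let ⟨c, hcb, hcy⟩ := h.exists_eq_of_sign_eq b y fun g ↦ (hyb g).symm
    ⟨c, hcy, hcb⟩

theorem exists_linearOrder_strictMono {K L M : Type*} [Field K] [Field L] [LinearOrder L]
    [IsStrictOrderedRing L] [Field M] [LinearOrder M] [IsStrictOrderedRing M] (φ : K →+* L)
    (ψ : K →+* M) (h : ∀ c, sign (φ c) = sign (ψ c)) :
    ∃ _ : LinearOrder K, IsStrictOrderedRing K ∧ StrictMono φ ∧ StrictMono ψ := by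
  let : LinearOrder K := LinearOrder.lift' φ φ.injective
  have hφ {a b : K} : φ a ≤ φ b ↔ a ≤ b := Iff.rfl
  have hφ' {a b : K} : φ a < φ b ↔ a < b := Iff.rfl
  refine ⟨this, Function.Injective.isStrictOrderedRing φ (map_zero φ) (map_one φ) (map_add φ)
    (map_mul φ) hφ hφ', fun _ _ ↦ hφ'.2, fun a b hab ↦ ?_⟩
  rwa [← sub_pos, ← map_sub, ← sign_eq_one_iff, ← h, sign_eq_one_iff, map_sub, sub_pos]

theorem exists_isMaximalCommonSubfield {L : Type u} {M : Type v} [Field L] [LinearOrder L]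
    [IsStrictOrderedRing L] [Field M] [LinearOrder M] [IsStrictOrderedRing M] {R : Type*}
    [CommRing R] (φ₀ : R →+* L) (ψ₀ : R →+* M) (h : ∀ r, sign (φ₀ r) = sign (ψ₀ r)) :
    ∃ (F : Type max u v) (_ : Field F) (_ : LinearOrder F) (_ : IsStrictOrderedRing F)
      (φ : F →+* L) (ψ : F →+* M) (i : R →+* F),
      IsMaximalCommonSubfield φ ψ ∧ φ.comp i = φ₀ ∧ ψ.comp i = ψ₀ := by
  have hcompat : SignCompatible (φ₀.prod ψ₀).range := by
    rintro _ ⟨r, rfl⟩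
    exact h r
  obtain ⟨G, hle, hG⟩ := hcompat.exists_le_maximal
  let : Field G := (SignCompatible.isField_of_maximal hG).toField
  let φ : G →+* L := (RingHom.fst L M).comp G.subtype
  let ψ : G →+* M := (RingHom.snd L M).comp G.subtype
  obtain ⟨_, hord, hφ, hψ⟩ := exists_linearOrder_strictMono φ ψ fun c ↦ hG.prop c c.2
  refine ⟨G, inferInstance, inferInstance, hord, φ, ψ,
    (φ₀.prod ψ₀).codRestrict G fun r ↦ hle ⟨r, rfl⟩, ⟨hφ, hψ, fun y b hyb ↦ ?_⟩, rfl, rfl⟩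
  have hmem : (y, b) ∈ G := SignCompatible.mem_of_maximal hG fun g ↦ by
    have hfst := Polynomial.hom_eval₂ g G.subtype (RingHom.fst L M) (y, b)
    have hsnd := Polynomial.hom_eval₂ g G.subtype (RingHom.snd L M) (y, b)
    exact (congrArg sign hfst).trans ((hyb g).trans (congrArg sign hsnd).symm)
  exact ⟨⟨(y, b), hmem⟩, rfl, rfl⟩

end SignCompatible

/-- The ring homomorphism `f : F →+* L` contains roots below degree `n` if each root in `L` of a
nonzero polynomial over `F` of degree less than `n` lies in the range of `f`. -/
def ContainsRootsBelow {F L : Type*} [Field F] [Field L] (f : F →+* L) (n : ℕ) : Prop :=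
  ∀ p : F[X], p ≠ 0 → p.natDegree < n → ∀ y, p.eval₂ f y = 0 → y ∈ Set.range f

section SignTransfer

variable {F L M : Type*} [Field F] [Field L] [LinearOrder L] [Field M] [LinearOrder M]

theorem sign_eval₂_eq_of_forall_natDegree_lt {φ : F →+* L} {ψ : F →+* M} {p : F[X]}
    (hp : 0 < p.natDegree) {y : L} {b : M} (hy : p.eval₂ φ y = 0) (hb : p.eval₂ ψ b = 0)
    (h : ∀ g : F[X], g.natDegree < p.natDegree → sign (g.eval₂ φ y) = sign (g.eval₂ ψ b))
    (g : F[X]) : sign (g.eval₂ φ y) = sign (g.eval₂ ψ b) := by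
  have hmod := h (g % p) (Polynomial.natDegree_mod_lt g hp.ne')
  rw [← EuclideanDomain.div_add_mod g p]
  simpa [Polynomial.eval₂_add, Polynomial.eval₂_mul, hy, hb] using hmod

variable [LinearOrder F]

theorem ContainsRootsBelow.derivative_eval₂_ne_zero [IsStrictOrderedRing F] {f : F →+* L}
    (hf : StrictMono f) {n : ℕ} (hroots : ContainsRootsBelow f n) {p : F[X]}
    (hp : 0 < p.natDegree) (hpn : p.natDegree ≤ n)
    {l u : F} (hlu : ∀ t ∈ p.derivative.roots, t ∉ Set.Ioo l u) :
    ∀ c ∈ Set.Ioo (f l) (f u), p.derivative.eval₂ f c ≠ 0 := by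
  intro c hc hroot
  have hp' : p.derivative ≠ 0 := mt Polynomial.derivative_eq_zero.1 hp.ne'
  obtain ⟨t, rfl⟩ := hroots _ hp' ((Polynomial.natDegree_derivative_lt hp.ne').trans_le hpn) c hroot
  refine hlu t ?_ ⟨hf.lt_iff_lt.1 hc.1, hf.lt_iff_lt.1 hc.2⟩
  simpa [hp', Polynomial.eval₂_at_apply] using hroot

variable [IsStrictOrderedRing L] [IsStrictOrderedRing M]

theorem exists_root_forall_sign_sub_eq (hL : PolynomialIVT L) (hM : PolynomialIVT M)
    {φ : F →+* L} {ψ : F →+* M} (hφ : StrictMono φ) (hψ : StrictMono ψ) {p : F[X]} {l u : F}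
    (hpφ : ∀ c ∈ Set.Ioo (φ l) (φ u), p.derivative.eval₂ φ c ≠ 0)
    (hpψ : ∀ c ∈ Set.Ioo (ψ l) (ψ u), p.derivative.eval₂ ψ c ≠ 0) {y : L}
    (hy : y ∈ Set.Ioo (φ l) (φ u)) (hroot : p.eval₂ φ y = 0) :
    ∃ b : M, p.eval₂ ψ b = 0 ∧ ∀ c : F, sign (φ c - y) = sign (ψ c - b) := by
  simp only [Polynomial.eval₂_eq_eval_map, ← Polynomial.derivative_map] at *
  have hlu : l < u := hφ.lt_iff_lt.1 (hy.1.trans hy.2)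
  have hsignφ {c : F} (hc : c ∈ Set.Icc l u) : sign (φ c - y) = sign (p.eval c * p.eval u) := by
    rw [hL.sign_sub_eq_sign_eval_mul hpφ hy hroot ⟨hφ.monotone hc.1, hφ.monotone hc.2⟩]
    simp [Polynomial.eval_map_apply, ← map_mul, hφ.sign_comp]
  have hneg : p.eval l * p.eval u < 0 := by
    rw [← sign_eq_neg_one_iff, ← hsignφ ⟨le_rfl, hlu.le⟩]
    exact sign_neg (sub_neg.2 hy.1)
  obtain ⟨b, hb, hbroot⟩ := hM (p.map ψ) (ψ l) (ψ u) (hψ hlu) (by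
    rw [Polynomial.eval_map_apply, Polynomial.eval_map_apply, ← map_mul, ← map_zero ψ]
    exact hψ hneg)
  refine ⟨b, hbroot, fun c ↦ ?_⟩
  rcases lt_or_ge c l with hcl | hlc
  · rw [sign_neg (sub_neg.2 ((hφ hcl).trans hy.1)), sign_neg (sub_neg.2 ((hψ hcl).trans hb.1))]
  rcases lt_or_ge u c with huc | hcu
  · rw [sign_pos (sub_pos.2 (hy.2.trans (hφ huc))), sign_pos (sub_pos.2 (hb.2.trans (hψ huc)))]
  · rw [hsignφ ⟨hlc, hcu⟩,
      hM.sign_sub_eq_sign_eval_mul hpψ hb hbroot ⟨hψ.monotone hlc, hψ.monotone hcu⟩]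
    simp [Polynomial.eval_map_apply, ← map_mul, hψ.sign_comp]

variable [IsStrictOrderedRing F]

theorem ContainsRootsBelow.sign_eval₂_eq_sign_eval (hL : PolynomialIVT L) {f : F →+* L}
    (hf : StrictMono f) {n : ℕ} (hroots : ContainsRootsBelow f n) {g : F[X]}
    (hgn : g.natDegree < n) {y : L} (hy : y ∉ Set.range f) {z : F}
    (hz : ∀ t ∈ g.roots, sign (z - t) = sign (y - f t)) :
    sign (g.eval₂ f y) = sign (g.eval z) := by
  rcases eq_or_ne g 0 with rfl | hg
  · simp
  rw [← sign_eval₂_ringHom hf, Polynomial.eval₂_eq_eval_map, Polynomial.eval₂_eq_eval_map]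
  refine hL.sign_eval_eq fun c hc hroot ↦ ?_
  rw [Polynomial.IsRoot, Polynomial.eval_map] at hroot
  obtain ⟨t, rfl⟩ := hroots g hg hgn c hroot
  have ht : t ∈ g.roots := by
    simpa [hg, Polynomial.eval₂_at_apply] using hroot
  have hside := hz t ht
  have hyt : y - f t ≠ 0 := sub_ne_zero.2 fun h ↦ hy ⟨t, h.symm⟩
  rw [← sign_ringHom_sub hf] at hside
  rcases Set.mem_uIcc.1 hc with ⟨hyt', htz⟩ | ⟨hzt, hty⟩
  · rw [sign_neg ((sub_nonpos.2 hyt').lt_of_ne hyt), sign_eq_neg_one_iff] at hside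
    exact hside.not_ge (sub_nonneg.2 htz)
  · rw [sign_pos ((sub_nonneg.2 hty).lt_of_ne' hyt), sign_eq_one_iff] at hside
    exact hside.not_ge (sub_nonpos.2 hzt)

theorem exists_lt_lt_derivative_ne_zero {f : F →+* L} (hf : StrictMono f) {p : F[X]} (hp : p ≠ 0)
    {y : L} (hy : y ∉ Set.range f) (hroot : p.eval₂ f y = 0) :
    ∃ l u : F, y ∈ Set.Ioo (f l) (f u) ∧ ∀ t ∈ p.derivative.roots, t ∉ Set.Ioo l u := by
  classical
  obtain ⟨B, hB⟩ := exists_lt_of_eval₂_eq_zero hf hp hroot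
  rw [abs_lt, ← map_neg] at hB
  obtain ⟨l, u, hl, hu, hT⟩ := exists_lt_lt_forall_le_or_le
    ({-B, B} ∪ p.derivative.roots.toFinset) hy ⟨-B, by simp, hB.1⟩ ⟨B, by simp, hB.2⟩
  refine ⟨l, u, ⟨hl, hu⟩, fun t ht hlu ↦ ?_⟩
  rcases hT t (Finset.mem_union_right _ (Multiset.mem_toFinset.2 ht)) with h | h
  · exact h.not_gt hlu.1
  · exact h.not_gt hlu.2

namespace IsMaximalCommonSubfield

variable {φ : F →+* L} {ψ : F →+* M}

theorem containsRootsBelow_succ (h : IsMaximalCommonSubfield φ ψ) (hL : PolynomialIVT L)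
    (hM : PolynomialIVT M) {n : ℕ} (hφ : ContainsRootsBelow φ n) (hψ : ContainsRootsBelow ψ n) :
    ContainsRootsBelow φ (n + 1) := by
  intro p hp hpn y hroot
  by_contra hy
  have hdeg : 0 < p.natDegree := by
    refine Nat.pos_of_ne_zero fun h0 ↦ ?_
    rw [Polynomial.eq_C_of_natDegree_eq_zero h0, Polynomial.eval₂_C, map_eq_zero] at hroot
    exact hp (by rw [Polynomial.eq_C_of_natDegree_eq_zero h0, hroot, map_zero])
  obtain ⟨l, u, hlu, hroots⟩ := exists_lt_lt_derivative_ne_zero h.strictMono_left hp hy hroot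
  obtain ⟨b, hb, hyb⟩ := exists_root_forall_sign_sub_eq hL hM h.strictMono_left
    h.strictMono_right
    (hφ.derivative_eval₂_ne_zero h.strictMono_left hdeg (Nat.lt_succ_iff.1 hpn) hroots)
    (hψ.derivative_eval₂_ne_zero h.strictMono_right hdeg (Nat.lt_succ_iff.1 hpn) hroots) hlu hroot
  have hbψ : b ∉ Set.range ψ := by
    rintro ⟨c, rfl⟩
    have := hyb c
    rw [sub_self, sign_zero, sign_eq_zero_iff, sub_eq_zero] at this
    exact hy ⟨c, this⟩
  have hsign (g : F[X]) (hg : g.natDegree < p.natDegree) :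
      sign (g.eval₂ φ y) = sign (g.eval₂ ψ b) := by
    have hgn : g.natDegree < n := hg.trans_le (Nat.lt_succ_iff.1 hpn)
    classical
    obtain ⟨z, hz⟩ := exists_sign_sub_eq h.strictMono_left g.roots.toFinset hy
    have hzφ : ∀ t ∈ g.roots, sign (z - t) = sign (y - φ t) := fun t ht ↦
      hz t (Multiset.mem_toFinset.2 ht)
    have hzψ : ∀ t ∈ g.roots, sign (z - t) = sign (b - ψ t) := fun t ht ↦ by
      rw [hzφ t ht, ← neg_sub, Left.sign_neg, hyb, ← Left.sign_neg, neg_sub]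
    rw [hφ.sign_eval₂_eq_sign_eval hL h.strictMono_left hgn hy hzφ,
      hψ.sign_eval₂_eq_sign_eval hM h.strictMono_right hgn hbψ hzψ]
  obtain ⟨c, hc, -⟩ := h.exists_eq_of_sign_eq y b
    (sign_eval₂_eq_of_forall_natDegree_lt hdeg hroot hb hsign)
  exact hy ⟨c, hc⟩

theorem containsRootsBelow (h : IsMaximalCommonSubfield φ ψ) (hL : PolynomialIVT L)
    (hM : PolynomialIVT M) (n : ℕ) : ContainsRootsBelow φ n ∧ ContainsRootsBelow ψ n := by
  induction n with
  | zero => exact ⟨fun _ _ hn ↦ absurd hn (Nat.not_lt_zero _),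
      fun _ _ hn ↦ absurd hn (Nat.not_lt_zero _)⟩
  | succ n ih => exact ⟨h.containsRootsBelow_succ hL hM ih.1 ih.2,
      h.swap.containsRootsBelow_succ hM hL ih.2 ih.1⟩

theorem exists_forall_sign_eval₂_eq (h : IsMaximalCommonSubfield φ ψ) (hL : PolynomialIVT L)
    (hM : PolynomialIVT M) (S : Finset F[X]) (y : L) :
    ∃ b : M, ∀ p ∈ S, sign (p.eval₂ φ y) = sign (p.eval₂ ψ b) := by
  classical
  by_cases hy : y ∈ Set.range φ
  · obtain ⟨c, rfl⟩ := hy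
    exact ⟨ψ c, fun p _ ↦ by
      rw [sign_eval₂_ringHom h.strictMono_left, sign_eval₂_ringHom h.strictMono_right]⟩
  obtain ⟨z, hz⟩ := exists_sign_sub_eq h.strictMono_left
    (S.biUnion fun p ↦ p.roots.toFinset) hy
  refine ⟨ψ z, fun p hp ↦ ?_⟩
  rw [sign_eval₂_ringHom h.strictMono_right]
  exact (h.containsRootsBelow hL hM _).1.sign_eval₂_eq_sign_eval hL h.strictMono_left
    (Nat.lt_succ_self _) hy fun t ht ↦
      hz t (Finset.mem_biUnion.2 ⟨p, hp, Multiset.mem_toFinset.2 ht⟩)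

end IsMaximalCommonSubfield

theorem exists_forall_sign_eval₂_eq (hL : PolynomialIVT L) (hM : PolynomialIVT M) {R : Type*}
    [CommRing R] (φ : R →+* L) (ψ : R →+* M) (h : ∀ r, sign (φ r) = sign (ψ r))
    (S : Finset R[X]) (y : L) :
    ∃ b : M, ∀ p ∈ S, sign (p.eval₂ φ y) = sign (p.eval₂ ψ b) := by
  classical
  obtain ⟨F, _, _, _, φ', ψ', i, hmax, rfl, rfl⟩ := exists_isMaximalCommonSubfield φ ψ h
  obtain ⟨b, hb⟩ := hmax.exists_forall_sign_eval₂_eq hL hM (S.image (Polynomial.map i)) y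
  exact ⟨b, fun p hp ↦ by
    simpa only [Polynomial.eval₂_map] using hb _ (Finset.mem_image_of_mem _ hp)⟩

end SignTransfer

section Ultrapower

/-- The diagonal embedding of a ring in its ultrapower. -/
def diagonalHom {I : Type*} (U : Ultrafilter I) (R : Type*) [CommSemiring R] :
    R →+* Filter.Germ (U : Filter I) R :=
  (Filter.Germ.coeRingHom (U : Filter I)).comp (Pi.constRingHom I R)

theorem eval_map_coeRingHom_germ {I R : Type*} [CommSemiring R] (l : Filter I) (p : (I → R)[X])
    (c : I → R) :
    (p.map (Filter.Germ.coeRingHom l)).eval (c : Filter.Germ l R) =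
      ((fun i ↦ (p.map (Pi.evalRingHom _ i)).eval (c i) : I → R) : Filter.Germ l R) := by
  have hpointwise : p.eval c = fun i ↦ (p.map (Pi.evalRingHom _ i)).eval (c i) :=
    funext fun i ↦ (Polynomial.eval_map_apply (Pi.evalRingHom (fun _ ↦ R) i) c).symm
  rw [← hpointwise]
  exact Polynomial.eval_map_apply (Filter.Germ.coeRingHom (R := R) l) c

theorem eval₂_diagonalHom {I R σ : Type*} [CommSemiring R] (U : Ultrafilter I) (a : σ → I → R)
    (p : MvPolynomial σ R) :
    eval₂ (diagonalHom U R) (fun s ↦ (a s : Filter.Germ (U : Filter I) R)) p =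
      ((fun i ↦ eval (a · i) p : I → R) : Filter.Germ (U : Filter I) R) := by
  have hpointwise : eval₂ (Pi.constRingHom I R) a p = fun i ↦ eval (a · i) p :=
    funext fun i ↦ eval₂_comp_left (Pi.evalRingHom (fun _ ↦ R) i) (Pi.constRingHom I R) a p
  rw [← hpointwise]
  exact (eval₂_comp_left (Filter.Germ.coeRingHom (R := R) (U : Filter I)) _ a p).symm

variable {I k : Type*} {U : Ultrafilter I} [Field k] [LinearOrder k]

theorem PolynomialIVT.germ (hk : PolynomialIVT k) :
    PolynomialIVT (Filter.Germ (U : Filter I) k) := by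
  intro p a b hab hneg
  have hsurj : Function.Surjective (Filter.Germ.coeRingHom (R := k) (U : Filter I)) :=
    Quotient.exists_rep
  obtain ⟨p, rfl⟩ := Polynomial.map_surjective _ hsurj p
  obtain ⟨a, rfl⟩ := hsurj a
  obtain ⟨b, rfl⟩ := hsurj b
  simp only [Filter.Germ.coe_coeRingHom] at hab hneg
  rw [eval_map_coeRingHom_germ, eval_map_coeRingHom_germ] at hneg
  have hroot : ∀ᶠ i in U, ∃ c ∈ Set.Ioo (a i) (b i), (p.map (Pi.evalRingHom _ i)).IsRoot c := by
    filter_upwards [Filter.Germ.coe_lt.1 hab, Filter.Germ.coe_lt.1 hneg] with i using hk _ _ _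
  obtain ⟨c, hc⟩ := hroot.choice
  refine ⟨(c : Filter.Germ (U : Filter I) k), ⟨?_, ?_⟩, ?_⟩
  · exact Filter.Germ.coe_lt.2 (hc.mono fun i h ↦ h.1.1)
  · exact Filter.Germ.coe_lt.2 (hc.mono fun i h ↦ h.1.2)
  · rw [Polynomial.IsRoot.def, eval_map_coeRingHom_germ]
    exact Filter.Germ.coe_eq.2 (hc.mono fun i h ↦ h.2)

theorem eventually_sign_eq_sign_germ (u : I → k) :
    ∀ᶠ i in U, sign (u i) = sign (u : Filter.Germ (U : Filter I) k) := by
  rcases lt_trichotomy (u : Filter.Germ (U : Filter I) k) 0 with h | h | h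
  · filter_upwards [Filter.Germ.coe_lt.1 h] with i hi
    rw [sign_neg h, sign_neg hi]
  · filter_upwards [Filter.Germ.coe_eq.1 h] with i hi
    rw [h, sign_zero, sign_eq_zero_iff, hi]
  · filter_upwards [Filter.Germ.coe_lt.1 h] with i hi
    rw [sign_pos h, sign_pos hi]

theorem exists_forall_sign_eval_eq_of_germ {σ : Type*} (x : σ → Filter.Germ (U : Filter I) k)
    (S : Finset (MvPolynomial σ k)) :
    ∃ a : σ → k, ∀ p ∈ S, sign (eval₂ (diagonalHom U k) x p) = sign (eval a p) := by
  choose a ha using fun s ↦ Quotient.exists_rep (x s)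
  obtain rfl : (fun s ↦ (a s : Filter.Germ (U : Filter I) k)) = x := funext ha
  have hsign : ∀ᶠ i in U, ∀ p ∈ S,
      sign (eval₂ (diagonalHom U k) (fun s ↦ (a s : Filter.Germ (U : Filter I) k)) p) =
        sign (eval (a · i) p) :=
    (Filter.eventually_all_finset S).2 fun p _ ↦ by
      filter_upwards [eventually_sign_eq_sign_germ fun i ↦ eval (a · i) p] with i hi
      rw [eval₂_diagonalHom, hi]
  exact ⟨_, hsign.exists.choose_spec⟩

theorem exists_germ_forall_sign_eval₂_eq {L σ : Type*} [CommSemiring L] [LinearOrder L]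
    {f : k →+* L} {x : σ → L}
    (h : ∀ S : Finset (MvPolynomial σ k), ∃ a : σ → k, ∀ p ∈ S,
      sign (eval₂ f x p) = sign (eval a p)) :
    ∃ (U : Ultrafilter (Finset (MvPolynomial σ k)))
      (y : σ → Filter.Germ (U : Filter (Finset (MvPolynomial σ k))) k),
      ∀ p, sign (eval₂ f x p) = sign (eval₂ (diagonalHom U k) y p) := by
  classical
  choose a ha using h
  let U := Ultrafilter.of (Filter.atTop : Filter (Finset (MvPolynomial σ k)))
  refine ⟨U, fun s ↦ (fun S ↦ a S s : Finset (MvPolynomial σ k) → k), fun p ↦ ?_⟩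
  have hp : ∀ᶠ S in (U : Filter (Finset (MvPolynomial σ k))), p ∈ S := Ultrafilter.of_le _ <|
    (Filter.eventually_ge_atTop {p}).mono fun S hS ↦ Finset.singleton_subset_iff.1 hS
  obtain ⟨S, hpS, hS⟩ := (hp.and (eventually_sign_eq_sign_germ fun S ↦ eval (a S) p)).exists
  rw [ha S p hpS, hS, eval₂_diagonalHom]

end Ultrapower

section Transfer

theorem eval₂_optionEquivLeft {R S σ : Type*} [CommSemiring R] [CommSemiring S] (f : R →+* S)
    (x : Option σ → S) (p : MvPolynomial (Option σ) R) :
    (optionEquivLeft R σ p).eval₂ (eval₂Hom f fun s ↦ x (some s)) (x none) = eval₂ f x p := by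
  induction p using MvPolynomial.induction_on with
  | C r => simp
  | add p q hp hq => rw [map_add, Polynomial.eval₂_add, hp, hq, eval₂_add]
  | mul_X p s hp => cases s <;> simp [Polynomial.eval₂_mul, hp]

variable {k L : Type*} [Field k] [LinearOrder k] [IsStrictOrderedRing k]
  [Field L] [LinearOrder L] [IsStrictOrderedRing L]

-- A point with coordinates in `L` is imitated one coordinate at a time in ultrapowers of `k`.
theorem exists_forall_sign_eval_eq (hk : PolynomialIVT k) (hL : PolynomialIVT L) (f : k →+* L)
    {σ : Type*} [Finite σ] (x : σ → L) (S : Finset (MvPolynomial σ k)) :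
    ∃ a : σ → k, ∀ p ∈ S, sign (eval₂ f x p) = sign (eval a p) := by
  classical
  induction σ using Finite.induction_empty_option with
  | of_equiv e ih =>
    obtain ⟨a, ha⟩ := ih (x ∘ e) (S.image (rename e.symm))
    refine ⟨a ∘ e.symm, fun p hp ↦ ?_⟩
    simpa [eval₂_rename, eval_rename, Function.comp_assoc] using
      ha _ (Finset.mem_image_of_mem _ hp)
  | h_empty =>
    refine ⟨isEmptyElim, fun p _ ↦ ?_⟩
    obtain ⟨r, rfl⟩ := C_surjective _ p
    rw [eval₂_C, eval_C, (hk.strictMono_ringHom f).sign_comp]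
  | @h_option σ _ ih =>
    obtain ⟨U, y, hy⟩ := exists_germ_forall_sign_eval₂_eq fun T ↦ ih (fun s ↦ x (some s)) T
    obtain ⟨b, hb⟩ := exists_forall_sign_eval₂_eq hL (hk.germ (U := U))
      (eval₂Hom f fun s ↦ x (some s)) (eval₂Hom (diagonalHom U k) y) hy
      (S.image (optionEquivLeft k σ)) (x none)
    obtain ⟨a, ha⟩ := exists_forall_sign_eval_eq_of_germ (fun s ↦ s.elim b y) S
    refine ⟨a, fun p hp ↦ ?_⟩
    rw [← ha p hp, ← eval₂_optionEquivLeft f x, hb _ (Finset.mem_image_of_mem _ hp),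
      ← eval₂_optionEquivLeft (diagonalHom U k)]
    rfl

end Transfer

section Semireal

theorem isSumSq_map {A B : Type*} [NonAssocSemiring A] [NonAssocSemiring B] (f : A →+* B) {s : A}
    (h : IsSumSq s) : IsSumSq (f s) := by
  induction h with
  | zero => rw [map_zero]; exact .zero
  | sq_add a _ ih => rw [map_add, map_mul]; exact ih.sq_add _

theorem isSemireal_of_ringHom {A B : Type*} [NonAssocRing A] [NonAssocRing B] (f : A →+* B)
    [IsSemireal B] : IsSemireal A :=
  .of_not_isSumSq_neg_one fun h ↦
    IsSemireal.not_isSumSq_neg_one B (by simpa using isSumSq_map f h)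

theorem isSumSq_div {E : Type*} [Semifield E] {a b : E} (ha : IsSumSq a) (hb : IsSumSq b) :
    IsSumSq (a / b) := by
  have : a / b = a * b * (b⁻¹ * b⁻¹) := by
    rcases eq_or_ne b 0 with rfl | h
    · simp
    · field_simp
  rw [this]
  exact (ha.mul hb).mul (.mul_self _)

theorem exists_isSumSq_re_eq_add_mul {R : Type*} [CommRing R] {a : R}
    {z : QuadraticAlgebra R a 0} (hz : IsSumSq z) :
    ∃ u v : R, IsSumSq u ∧ IsSumSq v ∧ z.re = u + a * v := by
  induction hz with
  | zero => exact ⟨0, 0, .zero, .zero, by simp⟩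
  | sq_add w _ ih =>
    obtain ⟨u, v, hu, hv, h⟩ := ih
    refine ⟨w.re * w.re + u, w.im * w.im + v, hu.sq_add _, hv.sq_add _, ?_⟩
    rw [QuadraticAlgebra.re_add, QuadraticAlgebra.re_mul, h]
    ring

end Semireal

section SerreLemma

variable {E : Type*} [Field E]

theorem exists_isSumSq_mul_sub_one {p : E[X]} (hp : 0 < p.natDegree)
    (h : IsSumSq (-1 : AdjoinRoot p)) :
    ∃ q : E[X], IsSumSq (p * q - 1) ∧ q.natDegree < p.natDegree := by
  have hlift {s : AdjoinRoot p} (hs : IsSumSq s) :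
      ∃ t : E[X], IsSumSq t ∧ t.natDegree < p.natDegree + p.natDegree ∧ AdjoinRoot.mk p t = s := by
    induction hs with
    | zero => exact ⟨0, .zero, by simpa using hp, map_zero _⟩
    | sq_add a _ ih =>
      obtain ⟨t, ht, hdeg, rfl⟩ := ih
      obtain ⟨f, rfl⟩ := AdjoinRoot.mk_surjective a
      have hmod : (f % p).natDegree < p.natDegree := Polynomial.natDegree_mod_lt f hp.ne'
      refine ⟨f % p * (f % p) + t, ht.sq_add _, ?_, ?_⟩
      · exact (Polynomial.natDegree_add_le _ _).trans_lt
          (max_lt (Polynomial.natDegree_mul_le.trans_lt (add_lt_add hmod hmod)) hdeg)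
      · have hmk : AdjoinRoot.mk p (f % p) = AdjoinRoot.mk p f := by
          rw [EuclideanDomain.mod_eq_sub_mul_div, map_sub, map_mul, AdjoinRoot.mk_self, zero_mul,
            sub_zero]
        rw [map_add, map_mul, hmk]
  obtain ⟨t, ht, hdeg, hmk⟩ := hlift h
  obtain ⟨q, hq⟩ : p ∣ t + 1 := by
    rw [← AdjoinRoot.mk_eq_zero, map_add, hmk, map_one, neg_add_cancel]
  refine ⟨q, by rwa [← hq, add_sub_cancel_right], ?_⟩
  rcases eq_or_ne q 0 with rfl | hq0
  · simpa using hp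
  have hmul := Polynomial.natDegree_mul (Polynomial.ne_zero_of_natDegree_gt hp) hq0
  rw [← hq, ← Polynomial.C_1, Polynomial.natDegree_add_C] at hmul
  omega

variable [LinearOrder E] [IsStrictOrderedRing E]

theorem exists_irreducible_dvd_eval_mul_eval_neg {p : E[X]} {a b : E}
    (hab : p.eval a * p.eval b < 0) :
    ∃ q, Irreducible q ∧ q ∣ p ∧ q.eval a * q.eval b < 0 := by
  induction p using WfDvdMonoid.induction_on_irreducible with
  | zero => simp at hab
  | unit u hu =>
    obtain ⟨c, -, rfl⟩ := Polynomial.isUnit_iff.1 hu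
    rw [Polynomial.eval_C, Polynomial.eval_C] at hab
    exact absurd hab (mul_self_nonneg c).not_gt
  | mul p i _ hi ih =>
    rw [Polynomial.eval_mul, Polynomial.eval_mul, mul_mul_mul_comm] at hab
    rcases mul_neg_iff.1 hab with ⟨-, hp⟩ | ⟨hi', -⟩
    · obtain ⟨q, hq, hqp, hneg⟩ := ih hp
      exact ⟨q, hq, hqp.mul_left i, hneg⟩
    · exact ⟨i, hi, dvd_mul_right i p, hi'⟩

-- Serre: if `-1` were a sum of squares modulo `p`, then `p * q = 1 + ∑ fᵢ ^ 2` for some `q` with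
-- `deg q < deg p`, and `q` changes sign together with `p`.
theorem isSemireal_adjoinRoot {p : E[X]} (hp : Irreducible p) {a b : E}
    (hab : p.eval a * p.eval b < 0) : IsSemireal (AdjoinRoot p) := by
  induction hn : p.natDegree using Nat.strong_induction_on generalizing p with
  | _ n ih =>
    refine .of_not_isSumSq_neg_one fun hneg ↦ ?_
    obtain ⟨q, hq, hdeg⟩ := exists_isSumSq_mul_sub_one hp.natDegree_pos hneg
    have hpos (x : E) : 0 < p.eval x * q.eval x := by
      have := (isSumSq_map (Polynomial.evalRingHom x) hq).nonneg
      simp only [Polynomial.coe_evalRingHom, Polynomial.eval_sub, Polynomial.eval_mul,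
        Polynomial.eval_one] at this
      linarith
    have hqab : q.eval a * q.eval b < 0 :=
      neg_of_mul_pos_right (by simpa only [mul_mul_mul_comm] using mul_pos (hpos a) (hpos b)) hab.le
    obtain ⟨r, hr, hrq, hrab⟩ := exists_irreducible_dvd_eval_mul_eval_neg hqab
    have hq0 : q ≠ 0 := fun h ↦ by simp [h] at hqab
    have := ih _ (hn ▸ (Polynomial.natDegree_le_of_dvd hrq hq0).trans_lt hdeg) hr hrab rfl
    refine IsSemireal.not_isSumSq_neg_one (AdjoinRoot r) ?_
    simpa [AdjoinRoot.mk_eq_zero.2 (hrq.mul_left p)] using! isSumSq_map (AdjoinRoot.mk r) hq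

end SerreLemma

/-- A semireal field without proper semireal algebraic extensions, which is one of the
characterisations of the real closed fields. Extensions are taken in the universe of `E`. -/
class IsMaximalSemireal (E : Type u) [Field E] : Prop extends IsSemireal E where
  surjective_algebraMap (K : Type u) [Field K] [Algebra E K] [Algebra.IsAlgebraic E K]
    [IsSemireal K] : Function.Surjective (algebraMap E K)

namespace IsMaximalSemireal

variable {E : Type u} [Field E] [IsMaximalSemireal E]

theorem isSumSq_or_isSumSq_neg (a : E) : IsSumSq a ∨ IsSumSq (-a) := by
  by_contra! h
  obtain ⟨ha, hna⟩ := h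
  have : Fact (∀ r : E, r ^ 2 ≠ a + 0 * r) := ⟨fun r hr ↦ ha <| by
    rw [zero_mul, add_zero] at hr
    exact hr ▸ (IsSquare.sq r).isSumSq⟩
  have hsemireal : ¬ IsSemireal (QuadraticAlgebra E a 0) := fun _ ↦ by
    obtain ⟨x, hx⟩ := surjective_algebraMap (E := E) (QuadraticAlgebra E a 0) ⟨0, 1⟩
    simpa using congrArg QuadraticAlgebra.im hx
  rw [isSemireal_iff_not_isSumSq_neg_one, not_not] at hsemireal
  obtain ⟨u, v, hu, hv, h⟩ := exists_isSumSq_re_eq_add_mul hsemireal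
  rw [QuadraticAlgebra.re_neg, QuadraticAlgebra.re_one] at h
  have hv0 : v ≠ 0 := by
    rintro rfl
    exact IsSemireal.not_isSumSq_neg_one E (by simpa [h] using hu)
  have hdiv : -a = (1 + u) / v := by
    field_simp
    linear_combination h
  exact hna (hdiv ▸ isSumSq_div (IsSumSq.one.add hu) hv)

variable (E) in
theorem exists_linearOrder : ∃ _ : LinearOrder E, IsStrictOrderedRing E := by
  classical
  let P : RingPreordering E :=
    ⟨.sumSq E, fun h ↦ Subsemiring.mem_sumSq.2 h.isSumSq,
      fun h ↦ IsSemireal.not_isSumSq_neg_one E (Subsemiring.mem_sumSq.1 h)⟩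
  let cone : RingCone E := ⟨.sumSq E, P.eq_zero_of_mem_of_neg_mem⟩
  have : HasMemOrNegMem cone := ⟨fun a ↦
    (isSumSq_or_isSumSq_neg a).imp Subsemiring.mem_sumSq.2 Subsemiring.mem_sumSq.2⟩
  let := LinearOrder.mkOfAddGroupCone cone
  have := IsOrderedRing.mkOfCone cone
  exact ⟨_, IsOrderedRing.toIsStrictOrderedRing E⟩

theorem polynomialIVT [LinearOrder E] [IsStrictOrderedRing E] : PolynomialIVT E := by
  intro p a b hlt hab
  obtain ⟨q, hq, hqp, hqab⟩ := exists_irreducible_dvd_eval_mul_eval_neg hab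
  have : Fact (Irreducible q) := ⟨hq⟩
  have := isSemireal_adjoinRoot hq hqab
  have : Module.Finite E (AdjoinRoot q) := (AdjoinRoot.powerBasis hq.ne_zero).finite
  obtain ⟨r, hr⟩ := surjective_algebraMap (E := E) (AdjoinRoot q) (AdjoinRoot.root q)
  have hroot : q.IsRoot r := by
    apply (AdjoinRoot.of q).injective
    rw [map_zero, ← Polynomial.eval₂_at_apply, ← AdjoinRoot.algebraMap_eq, hr]
    exact AdjoinRoot.eval₂_root q
  obtain ⟨m, n, rfl⟩ := Polynomial.exists_eq_X_add_C_of_natDegree_le_one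
    (Polynomial.natDegree_le_of_degree_le
      (Polynomial.degree_eq_one_of_irreducible_of_root hq hroot).le)
  have hn : n = - (m * r) := by simpa [add_eq_zero_iff_eq_neg'] using hroot
  have hsign : m * m * ((a - r) * (b - r)) < 0 := by
    convert hqab using 1
    simp [hn]
    ring
  refine ⟨r, ?_, hroot.dvd hqp⟩
  rcases mul_neg_iff.1 (neg_of_mul_neg_right hsign (mul_self_nonneg m)) with h | h
  · linarith [h.1, h.2]
  · exact ⟨sub_neg.1 h.1, sub_pos.1 h.2⟩

end IsMaximalSemireal

section Existence

theorem isSemireal_sSup_of_directedOn {K : Type*} [Field K] {c : Set (Subfield K)}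
    (hne : c.Nonempty) (hdir : DirectedOn (· ≤ ·) c) (hc : ∀ F ∈ c, IsSemireal F) :
    IsSemireal (sSup c : Subfield K) := by
  have hdescend {s : (sSup c : Subfield K)} (hs : IsSumSq s) :
      ∃ F ∈ c, ∃ t : F, IsSumSq t ∧ (t : K) = s := by
    induction hs with
    | zero => exact hne.imp fun F hF ↦ ⟨hF, 0, .zero, rfl⟩
    | sq_add a _ ih =>
      obtain ⟨F, hF, t, ht, hts⟩ := ih
      obtain ⟨G, hG, haG⟩ := (Subfield.mem_sSup_of_directedOn hne hdir).1 a.2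
      obtain ⟨H, hH, hFH, hGH⟩ := hdir F hF G hG
      exact ⟨H, hH, ⟨a, hGH haG⟩ * ⟨a, hGH haG⟩ + Subfield.inclusion hFH t,
        (isSumSq_map _ ht).sq_add _, congrArg ((a * a : K) + ·) hts⟩
  refine .of_not_isSumSq_neg_one fun h ↦ ?_
  obtain ⟨F, hF, t, ht, hts⟩ := hdescend h
  have := hc F hF
  obtain rfl : t = -1 := Subtype.ext (by simpa using hts)
  exact IsSemireal.not_isSumSq_neg_one F ht

theorem isMaximalSemireal_of_maximal {Ω : Type u} [Field Ω] [IsAlgClosed Ω] {F : Subfield Ω}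
    (hF : Maximal (fun F : Subfield Ω ↦ IsSemireal F) F) : IsMaximalSemireal F where
  __ := hF.prop
  surjective_algebraMap K _ _ _ _ := by
    let f : K →ₐ[F] Ω := IsAlgClosed.lift
    have hle : F ≤ f.toRingHom.fieldRange := fun z hz ↦
      ⟨algebraMap F K ⟨z, hz⟩, f.commutes ⟨z, hz⟩⟩
    have hsemireal : IsSemireal f.toRingHom.fieldRange :=
      isSemireal_of_ringHom f.toRingHom.rangeRestrictFieldEquiv.symm.toRingHom
    intro y
    have hy : f y ∈ F := hF.le_of_ge hsemireal hle ⟨y, rfl⟩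
    exact ⟨⟨f y, hy⟩, f.injective (f.commutes ⟨f y, hy⟩)⟩

theorem exists_isMaximalSemireal (K : Type u) [Field K] [IsSemireal K] :
    ∃ (E : Type u) (_ : Field E) (_ : K →+* E), IsMaximalSemireal E := by
  let i := algebraMap K (AlgebraicClosure K)
  have hsemireal : IsSemireal i.fieldRange :=
    isSemireal_of_ringHom (RingHom.rangeRestrictFieldEquiv i).symm.toRingHom
  obtain ⟨F, hKF, hF⟩ := zorn_le_nonempty₀ {F : Subfield (AlgebraicClosure K) | IsSemireal F}
    (fun c hc hchain y hy ↦ ⟨sSup c, isSemireal_sSup_of_directedOn ⟨y, hy⟩ hchain.directedOn hc,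
      fun _ ↦ le_sSup⟩) _ hsemireal
  exact ⟨F, inferInstance, (Subfield.inclusion hKF).comp i.rangeRestrictField,
    isMaximalSemireal_of_maximal hF⟩

end Existence

section RealIdeal

/-- An ideal `J` of a commutative ring is real if a square which becomes an element of `J` after
adding a sum of squares is the square of an element of `J`. Iterating, this is the usual condition
that all `a i` lie in `J` as soon as `∑ i, a i ^ 2` does. -/
def IsRealIdeal {R : Type*} [CommRing R] (J : Ideal R) : Prop :=
  ∀ a s : R, IsSumSq s → a * a + s ∈ J → a ∈ J

namespace IsRealIdeal

variable {R : Type*} [CommRing R]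

theorem mem_of_mul_self_mem {J : Ideal R} (hJ : IsRealIdeal J) {a : R} (ha : a * a ∈ J) : a ∈ J :=
  hJ a 0 .zero (by rwa [add_zero])

theorem colon_singleton {J : Ideal R} (hJ : IsRealIdeal J) (a : R) :
    IsRealIdeal (Submodule.colon J {a} : Ideal R) := by
  intro x s hs h
  rw [Submodule.mem_colon_singleton, smul_eq_mul] at h ⊢
  refine hJ (x * a) (s * (a * a)) (hs.mul (.mul_self a)) ?_
  convert J.mul_mem_right a h using 1
  ring

theorem isPrime_of_maximal {J P : Ideal R} {f : R}
    (hP : Maximal (fun P ↦ J ≤ P ∧ IsRealIdeal P ∧ f ∉ P) P) : P.IsPrime := by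
  obtain ⟨hJP, hreal, hf⟩ := hP.prop
  -- Otherwise the colon ideal `P : b` would be a larger real ideal avoiding `f`.
  have hcolon {a b : R} (hab : a * b ∈ P) (ha : a ∉ P) : f * b ∈ P := by
    by_contra hfb
    have hle : P ≤ Submodule.colon P {b} := fun x hx ↦
      Submodule.mem_colon_singleton.2 (P.mul_mem_right b hx)
    have hmem : Submodule.colon P {b} ≤ P := hP.le_of_ge
      ⟨hJP.trans hle, hreal.colon_singleton b, by rwa [Submodule.mem_colon_singleton]⟩ hle
    exact ha (hmem (Submodule.mem_colon_singleton.2 hab))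
  refine ⟨fun h ↦ hf (h ▸ Submodule.mem_top), fun {a b} hab ↦ or_iff_not_imp_left.2 fun ha ↦ ?_⟩
  by_contra hb
  have hbf : b * f ∈ P := mul_comm f b ▸ hcolon hab ha
  exact hf (hreal.mem_of_mul_self_mem (hcolon hbf hb))

theorem exists_le_isPrime_notMem [IsNoetherianRing R] {J : Ideal R} (hJ : IsRealIdeal J) {f : R}
    (hf : f ∉ J) : ∃ P : Ideal R, J ≤ P ∧ P.IsPrime ∧ IsRealIdeal P ∧ f ∉ P := by
  obtain ⟨P, hP⟩ := exists_maximal_of_wellFoundedGT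
    (fun P : Ideal R ↦ J ≤ P ∧ IsRealIdeal P ∧ f ∉ P) ⟨J, le_rfl, hJ, hf⟩
  exact ⟨P, hP.prop.1, isPrime_of_maximal hP, hP.prop.2⟩

theorem isSemireal_residueField {P : Ideal R} [P.IsPrime] (hP : IsRealIdeal P) :
    IsSemireal P.ResidueField := by
  let φ := algebraMap R P.ResidueField
  have hφ (a : R) : φ a = 0 ↔ a ∈ P := P.algebraMap_residueField_eq_zero
  have hfrac (x : P.ResidueField) : ∃ a b, b ∉ P ∧ x = φ a / φ b := by
    obtain ⟨a, b, hb, rfl⟩ := IsFractionRing.div_surjective (A := R ⧸ P) x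
    obtain ⟨a, rfl⟩ := Ideal.Quotient.mk_surjective a
    obtain ⟨b, rfl⟩ := Ideal.Quotient.mk_surjective b
    exact ⟨a, b, fun h ↦ nonZeroDivisors.ne_zero hb (Ideal.Quotient.eq_zero_iff_mem.2 h), rfl⟩
  have hclear {s : P.ResidueField} (hs : IsSumSq s) :
      ∃ b t, b ∉ P ∧ IsSumSq t ∧ s * φ (b * b) = φ t := by
    induction hs with
    | zero => exact ⟨1, 0, P.one_notMem, .zero, by simp⟩
    | sq_add x _ ih =>
      obtain ⟨b, t, hb, ht, hst⟩ := ih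
      obtain ⟨c, e, he, rfl⟩ := hfrac x
      have hφe : φ e ≠ 0 := (hφ e).not.2 he
      refine ⟨b * e, (c * b) * (c * b) + e * e * t, ‹P.IsPrime›.mul_notMem hb he,
        ((IsSumSq.mul_self e).mul ht).sq_add _, ?_⟩
      simp only [map_add, map_mul, ← hst]
      field_simp
  refine .of_not_isSumSq_neg_one fun h ↦ ?_
  obtain ⟨b, t, hb, ht, hbt⟩ := hclear h
  refine hb (hP b t ht ((hφ _).1 ?_))
  rw [map_add, ← hbt]
  ring

end IsRealIdeal

end RealIdeal

section RealNullstellensatz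

namespace IsRealIdeal

variable {k σ : Type*} [Field k] [LinearOrder k] [IsStrictOrderedRing k] [Finite σ]

-- The coordinate functions form a generic zero of `P` in a maximal semireal extension of its
-- residue field; the transfer theorem replaces it by a point over `k`.
theorem exists_forall_eval_eq_zero_iff_mem (hk : PolynomialIVT k) {P : Ideal (MvPolynomial σ k)}
    [P.IsPrime] (hP : IsRealIdeal P) (S : Finset (MvPolynomial σ k)) :
    ∃ a : σ → k, ∀ f ∈ S, eval a f = 0 ↔ f ∈ P := by
  have := hP.isSemireal_residueField
  obtain ⟨L, _, ρ, _⟩ := exists_isMaximalSemireal P.ResidueField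
  obtain ⟨_, _⟩ := IsMaximalSemireal.exists_linearOrder L
  let φ : MvPolynomial σ k →+* L := ρ.comp (algebraMap _ _)
  have hφ (f : MvPolynomial σ k) : φ f = 0 ↔ f ∈ P :=
    (map_eq_zero ρ).trans P.algebraMap_residueField_eq_zero
  have heval (f : MvPolynomial σ k) : eval₂ (φ.comp C) (fun i ↦ φ (X i)) f = φ f :=
    (map_eval₂Hom C X φ f).symm.trans (congrArg φ (eval₂_eta f))
  obtain ⟨a, ha⟩ := exists_forall_sign_eval_eq hk IsMaximalSemireal.polynomialIVT (φ.comp C)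
    (fun i ↦ φ (X i)) S
  exact ⟨a, fun f hf ↦ by rw [← hφ, ← heval, ← sign_eq_zero_iff, ← ha f hf, sign_eq_zero_iff]⟩

theorem mem_of_forall_eval_eq_zero (hk : PolynomialIVT k) {J : Ideal (MvPolynomial σ k)}
    (hJ : IsRealIdeal J) {f : MvPolynomial σ k}
    (hf : ∀ a : σ → k, (∀ g ∈ J, eval a g = 0) → eval a f = 0) : f ∈ J := by
  classical
  by_contra hfJ
  obtain ⟨P, hJP, _, hP, hfP⟩ := hJ.exists_le_isPrime_notMem hfJ
  obtain ⟨S, rfl⟩ := IsNoetherian.noetherian J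
  obtain ⟨a, ha⟩ := hP.exists_forall_eval_eq_zero_iff_mem hk (insert f S)
  have hS : Ideal.span S ≤ RingHom.ker (eval a) := Ideal.span_le.2 fun g hg ↦
    (ha g (Finset.mem_insert_of_mem hg)).2 (hJP (Ideal.subset_span hg))
  exact hfP ((ha f (Finset.mem_insert_self f S)).1 (hf a fun g hg ↦ hS hg))

end IsRealIdeal

end RealNullstellensatz

section Quaternion

section Map

variable {R S : Type*} [CommRing R] [CommRing S]

/-- The ring homomorphism `ℍ[R] →+* ℍ[S]` applying `f : R →+* S` to each component; for
`f = MvPolynomial.eval a` it is evaluation of quaternionic polynomials in central variables. -/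
def quaternionMap (f : R →+* S) : ℍ[R] →+* ℍ[S] where
  toFun x := ⟨f x.re, f x.imI, f x.imJ, f x.imK⟩
  map_zero' := by ext <;> exact map_zero f
  map_one' := by
    ext
    exacts [map_one f, map_zero f, map_zero f, map_zero f]
  map_add' x y := by ext <;> exact map_add f _ _
  map_mul' x y := by
    ext <;> simp only [Quaternion.re_mul, Quaternion.imI_mul, Quaternion.imJ_mul,
      Quaternion.imK_mul, map_add, map_sub, map_mul] <;> symm
    exacts [Quaternion.re_mul _ _, Quaternion.imI_mul _ _, Quaternion.imJ_mul _ _,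
      Quaternion.imK_mul _ _]

variable (f : R →+* S) (x : ℍ[R])

@[simp] theorem re_quaternionMap : (quaternionMap f x).re = f x.re := rfl

@[simp] theorem imI_quaternionMap : (quaternionMap f x).imI = f x.imI := rfl

@[simp] theorem imJ_quaternionMap : (quaternionMap f x).imJ = f x.imJ := rfl

@[simp] theorem imK_quaternionMap : (quaternionMap f x).imK = f x.imK := rfl

theorem star_quaternionMap : star (quaternionMap f x) = quaternionMap f (star x) := by
  ext <;> simp

theorem normSq_quaternionMap :
    Quaternion.normSq (quaternionMap f x) = f (Quaternion.normSq x) := by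
  simp [Quaternion.normSq_def']

end Map

section RealLeftIdeal

variable {A : Type*} [Ring A] [StarRing A]

theorem isRealLeftIdeal_ker {k : Type*} [CommRing k] [LinearOrder k] [IsStrictOrderedRing k]
    (f : A →+* ℍ[k]) (hf : ∀ x, star (f x) = f (star x)) : (RingHom.ker f).IsRealLeftIdeal := by
  intro n x hx i
  have hsum : ((∑ i, Quaternion.normSq (f (x i)) : k) : ℍ[k]) = (0 : k) := by
    rw [Quaternion.coe_zero, ← (RingHom.mem_ker.1 hx), map_sum, ← Quaternion.algebraMap_def,
      map_sum]
    simp only [Quaternion.algebraMap_def, map_mul, ← hf, Quaternion.star_mul_self]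
  have hzero := (Finset.sum_eq_zero_iff_of_nonneg fun i _ ↦ Quaternion.normSq_nonneg).1
    (Quaternion.coe_injective hsum) i (Finset.mem_univ i)
  exact Quaternion.normSq_eq_zero.1 hzero

theorem mem_of_star_mul_self_mem {I : Ideal A} (hI : I.IsRealLeftIdeal) {a : A}
    (ha : star a * a ∈ I) : a ∈ I :=
  hI 1 (fun _ ↦ a) (by simpa using ha) 0

theorem exists_eq_sum_mul_self {R : Type*} [NonUnitalNonAssocSemiring R] {s : R}
    (hs : IsSumSq s) : ∃ (n : ℕ) (u : Fin n → R), s = ∑ i, u i * u i := by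
  induction hs with
  | zero => exact ⟨0, Fin.elim0, by simp⟩
  | sq_add x _ ih =>
    obtain ⟨n, u, rfl⟩ := ih
    exact ⟨n + 1, Fin.cons x u, by simp [Fin.sum_univ_succ]⟩

theorem isRealIdeal_comap {R : Type*} [CommRing R] {I : Ideal A} (hI : I.IsRealLeftIdeal)
    (φ : R →+* A) (hφ : ∀ r, star (φ r) = φ r) : IsRealIdeal (I.comap φ) := by
  intro a s hs h
  obtain ⟨n, u, rfl⟩ := exists_eq_sum_mul_self hs
  exact hI (n + 1) (Fin.cons (φ a) (φ ∘ u))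
    (by simpa [Fin.sum_univ_succ, hφ, Ideal.mem_comap] using h) 0

end RealLeftIdeal

end Quaternion

theorem quaternionic_nullstellensatz_central_general {k σ ι : Type*} [Field k] [LinearOrder k]
    [IsStrictOrderedRing k] (hk : PolynomialIVT k) [Finite σ] (p : ι → ℍ[MvPolynomial σ k])
    (q : ℍ[MvPolynomial σ k]) :
    (∀ a : σ → k, (∀ i, quaternionMap (eval a) (p i) = 0) → quaternionMap (eval a) q = 0) ↔
      ∀ I : Ideal ℍ[MvPolynomial σ k], I.IsRealLeftIdeal → (∀ i, p i ∈ I) → q ∈ I := by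
  constructor
  · intro h I hI hp
    let J : Ideal (MvPolynomial σ k) := I.comap (algebraMap _ ℍ[MvPolynomial σ k])
    have hJ : IsRealIdeal J := isRealIdeal_comap hI _ Quaternion.star_coe
    have hmem (x : ℍ[MvPolynomial σ k]) : Quaternion.normSq x ∈ J ↔ star x * x ∈ I := by
      rw [Quaternion.star_mul_self]
      rfl
    refine mem_of_star_mul_self_mem hI ((hmem q).1 (hJ.mem_of_forall_eval_eq_zero hk fun a ha ↦ ?_))
    have hpa (i : ι) : quaternionMap (eval a) (p i) = 0 := by
      rw [← Quaternion.normSq_eq_zero, normSq_quaternionMap]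
      exact ha _ ((hmem _).2 (I.mul_mem_left _ (hp i)))
    rw [← normSq_quaternionMap, h a hpa, map_zero]
  · intro h a ha
    exact h _ (isRealLeftIdeal_ker _ (star_quaternionMap (eval a))) ha

/-- **First Quaternionic Nullstellensatz (Theorem B).** -/
theorem quaternionic_nullstellensatz_central (d m : ℕ)
    (p : Fin m → Quaternion (MvPolynomial (Fin d) ℝ))
    (q : Quaternion (MvPolynomial (Fin d) ℝ)) :
    (∀ a : Fin d → ℝ, (∀ i, evalQ a (p i) = 0) → evalQ a q = 0) ↔
      (∀ I : Ideal (Quaternion (MvPolynomial (Fin d) ℝ)),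
        I.IsRealLeftIdeal → (∀ i, p i ∈ I) → q ∈ I) :=
  quaternionic_nullstellensatz_central_general polynomialIVT_real p q
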